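/- arXiv:1603.06043 — 2 statements merged into one kernel-verified Lean document; each statement's English description precedes it below -/
import Mathlib

section
/- Let (s_k)_{k∈ℕ₀} be a Hamburger moment sequence that is indeterminate: there exist two distinct nonnegative Borel measures σ₁ ≠ σ₂ on ℝ, each with all moments finite, such that s_k = ∫_ℝ x^k dσ₁(x) = ∫_ℝ x^k dσ₂(x) for all k ∈ ℕ₀. Let d ∈ ℕ with d ≥ 1 and let ℓ₀ be an even natural number, and let s̃_k = s_{kd+ℓ₀}. Then (s̃_k)_{k∈ℕ₀} is an indeterminate Hamburger moment sequence: there exist two distinct nonnegative Borel measures τ₁ ≠ τ₂ on ℝ, each with all moments finite, such that s̃_k = ∫_ℝ x^k dτ₁(x) = ∫_ℝ x^k dτ₂(x) for all k ∈ ℕ₀. -/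
open MeasureTheory

/-! If `σ` and `τ` are distinct measures with the same moments, then `p ↦ p(i)` is bounded on the
real polynomials in `L²((σ + τ) / (1 + x²))`: otherwise `(x - i)⁻¹` would be an `L¹(σ + τ)`-limit
of polynomials, and the star-algebra it generates could not tell `σ` from `τ`. So for small `c > 0`
the functional `r ↦ ∫ r / (1 + x²) d(σ + τ) - c Re r(i)` is nonnegative on sums of squares, hence
on all nonnegative polynomials, and by Haviland's theorem it is integration against some `ν`.
Since `1 + x²` vanishes at `i`, the measure `(1 + x²) ν` has the moments of `σ + τ`, but its
integral of `1 / (1 + x²)` is smaller by `c`.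

Thus every indeterminate sequence has two representing measures on which the integrals of
`1 / (1 + x²)` differ. As `1 / (1 + x²)` is a function of `x ^ d`, even when `d` is even, such
measures stay distinct after pushing forward under `x ↦ x ^ d`. The shift by an even `ℓ₀` is
multiplication by the density `x ^ ℓ₀`, which loses at most an atom at `0`, and that atom is
determined by the total mass. -/

section HamburgerMoments

open Polynomial Filter Topology
open scoped CompactlySupported BoundedContinuousFunction NNReal ENNReal

section SumsOfSquares

theorem sq_X_sub_C_dvd_of_eval_nonneg {r : ℝ[X]} (hr : ∀ x, 0 ≤ r.eval x) {a : ℝ}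
    (ha : r.IsRoot a) : (X - C a) ^ 2 ∣ r := by
  rcases eq_or_ne r 0 with rfl | hr₀
  · exact dvd_zero _
  have hmin : IsLocalMin (fun x => r.eval x) a := .of_forall fun x => ha.le.trans (hr x)
  have hderiv : r.derivative.IsRoot a := by simpa using hmin.deriv_eq_zero
  exact (le_rootMultiplicity_iff hr₀).1 ((one_lt_rootMultiplicity_iff_isRoot hr₀).2 ⟨ha, hderiv⟩)

theorem exists_sq_X_sub_C_add_sq_C_dvd_of_eval_nonneg {r : ℝ[X]} (hr : ∀ x, 0 ≤ r.eval x)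
    (hdeg : r.natDegree ≠ 0) : ∃ a b : ℝ, (X - C a) ^ 2 + C b ^ 2 ∣ r := by
  obtain ⟨z, hz⟩ := IsAlgClosed.exists_aeval_eq_zero ℂ r
    (degree_ne_of_natDegree_ne (n := 0) hdeg)
  refine ⟨z.re, z.im, ?_⟩
  rcases eq_or_ne z.im 0 with him | him
  · have hroot : r.IsRoot z.re := by
      rw [← Complex.conj_eq_iff_im, Complex.conj_eq_iff_re] at him
      rw [← him, ← Complex.coe_algebraMap, aeval_algebraMap_apply] at hz
      simpa using hz
    simpa [him] using sq_X_sub_C_dvd_of_eval_nonneg hr hroot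
  · convert quadratic_dvd_of_aeval_eq_zero_im_ne_zero r hz him using 1
    rw [Complex.sq_norm, Complex.normSq_apply]
    simp only [map_mul, map_add, map_ofNat]
    ring

theorem eval_nonneg_of_mul_eval_nonneg {p q : ℝ[X]} (hp₀ : p ≠ 0) (hp : ∀ x, 0 ≤ p.eval x)
    (hpq : ∀ x, 0 ≤ (p * q).eval x) (x : ℝ) : 0 ≤ q.eval x := by
  have hdense : Dense {x | p.IsRoot x}ᶜ :=
    (finite_setOfPred_isRoot hp₀).countable.dense_compl ℝ
  have hclosed : IsClosed {x | 0 ≤ q.eval x} := isClosed_le continuous_const q.continuous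
  refine hclosed.closure_subset_iff.2 (fun y hy => ?_) (hdense x)
  exact nonneg_of_mul_nonneg_right (eval_mul (p := p) ▸ hpq y) ((hp y).lt_of_ne' hy)

theorem exists_eq_sq_add_sq_of_eval_nonneg {r : ℝ[X]} (hr : ∀ x, 0 ≤ r.eval x) :
    ∃ p q : ℝ[X], r = p ^ 2 + q ^ 2 := by
  induction hn : r.natDegree using Nat.strong_induction_on generalizing r with
  | _ n ih =>
    subst hn
    rcases eq_or_ne r.natDegree 0 with hdeg | hdeg
    · obtain ⟨c, rfl⟩ := natDegree_eq_zero.1 hdeg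
      refine ⟨C √c, 0, ?_⟩
      rw [← C_pow, Real.sq_sqrt (by simpa using hr 0), zero_pow two_ne_zero, add_zero]
    · obtain ⟨a, b, t, rfl⟩ := exists_sq_X_sub_C_add_sq_C_dvd_of_eval_nonneg hr hdeg
      have hmonic : ((X - C a) ^ 2 + C b ^ 2).Monic := by
        rw [← C_pow]; exact ((monic_X_sub_C a).pow 2).add_of_left (by simp [degree_C_lt])
      have hnatDegree : ((X - C a) ^ 2 + C b ^ 2).natDegree = 2 := by
        rw [← C_pow, natDegree_add_C, natDegree_pow, natDegree_X_sub_C]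
      have ht : ∀ x, 0 ≤ t.eval x :=
        eval_nonneg_of_mul_eval_nonneg hmonic.ne_zero
          (fun x => by simpa using add_nonneg (sq_nonneg (x - a)) (sq_nonneg b)) hr
      have ht₀ : t ≠ 0 := by rintro rfl; simp at hdeg
      obtain ⟨p, q, htpq⟩ := ih t.natDegree
        (by rw [hmonic.natDegree_mul' ht₀, hnatDegree]; lia) ht rfl
      exact sq_add_sq_mul rfl htpq

end SumsOfSquares

section PositiveFunctionals

theorem exists_linearMap_extension_of_nonneg {L : ℝ[X] →ₗ[ℝ] ℝ}
    (hL : ∀ r : ℝ[X], (∀ x, 0 ≤ r.eval x) → 0 ≤ L r) :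
    ∃ G : (ℝ[X] × C_c(ℝ, ℝ)) →ₗ[ℝ] ℝ, (∀ p, G (p, 0) = L p) ∧
      ∀ p f, (∀ x, 0 ≤ p.eval x + f x) → 0 ≤ G (p, f) := by
  let K : PointedCone ℝ (ℝ[X] × C_c(ℝ, ℝ)) :=
    { carrier := {y | ∀ x, 0 ≤ y.1.eval x + y.2 x}
      add_mem' := fun {a b} ha hb x => by
        have := add_nonneg (ha x) (hb x)
        simp only [Prod.fst_add, Prod.snd_add, eval_add, CompactlySupportedContinuousMap.add_apply]
        linarith
      zero_mem' := fun x => by simp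
      smul_mem' := fun c a ha x => by
        change 0 ≤ ((c : ℝ) • a.1).eval x + ((c : ℝ) • a.2) x
        rw [eval_smul, CompactlySupportedContinuousMap.smul_apply, ← smul_add]
        exact mul_nonneg c.2 (ha x) }
  let F : (ℝ[X] × C_c(ℝ, ℝ)) →ₗ.[ℝ] ℝ :=
    { domain := Submodule.prod ⊤ ⊥
      toFun := (L ∘ₗ LinearMap.fst ℝ _ _) ∘ₗ Submodule.subtype _ }
  have hF_nonneg : ∀ y : F.domain, (y : ℝ[X] × C_c(ℝ, ℝ)) ∈ K → 0 ≤ F y := by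
    rintro ⟨⟨p, f⟩, hf⟩ hy
    obtain rfl : f = 0 := hf.2
    exact hL p fun x => by simpa using hy x
  have hF_cofinal : ∀ y, ∃ z : F.domain, (z : ℝ[X] × C_c(ℝ, ℝ)) + y ∈ K := by
    rintro ⟨p, f⟩
    obtain ⟨M, hM⟩ := f.hasCompactSupport.exists_bound_of_continuous f.continuous
    refine ⟨⟨(C M - p, 0), trivial, rfl⟩, fun x => ?_⟩
    simpa using neg_le_iff_add_nonneg'.1 (abs_le.1 (hM x)).1
  obtain ⟨G, hGF, hGK⟩ := riesz_extension K F hF_nonneg hF_cofinal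
  exact ⟨G, fun p => hGF ⟨(p, 0), trivial, rfl⟩, fun p f h => hGK (p, f) h⟩

theorem exists_measure_nonneg_add_integral {L : ℝ[X] →ₗ[ℝ] ℝ}
    (hL : ∀ r : ℝ[X], (∀ x, 0 ≤ r.eval x) → 0 ≤ L r) :
    ∃ ν : Measure ℝ, IsFiniteMeasureOnCompacts ν ∧
      ∀ (p : ℝ[X]) (f : C_c(ℝ, ℝ)), (∀ x, 0 ≤ p.eval x + f x) → 0 ≤ L p + ∫ x, f x ∂ν := by
  obtain ⟨G, hGL, hG⟩ := exists_linearMap_extension_of_nonneg hL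
  let T : C_c(ℝ, ℝ) →ₚ[ℝ] ℝ := PositiveLinearMap.mk₀ (G ∘ₗ LinearMap.inr ℝ _ _)
    fun f hf => hG 0 f fun x => by simpa using hf x
  refine ⟨RealRMK.rieszMeasure T, inferInstance, fun p f hpf => ?_⟩
  have hT : T f = G (0, f) := rfl
  rw [RealRMK.integral_rieszMeasure, hT, ← hGL, ← map_add, Prod.mk_add_mk, add_zero, zero_add]
  exact hG p f hpf

/-- The truncations `max 0 (1 - x ^ 2 / (n + 1))`, which increase to the constant `1`. They let
compactly supported functions approximate polynomials from below. -/
noncomputable def parabolicCutoff (n : ℕ) : C_c(ℝ, ℝ) where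
  toFun x := max 0 (1 - x ^ 2 / (n + 1))
  hasCompactSupport' := by
    refine .of_support_subset_isCompact (isCompact_closedBall (0 : ℝ) √(n + 1)) fun x hx => ?_
    rw [mem_closedBall_zero_iff, Real.norm_eq_abs]
    contrapose! hx
    have hn : (n + 1 : ℝ) ≤ x ^ 2 :=
      ((Real.sqrt_le_left (abs_nonneg x)).1 hx.le).trans_eq (sq_abs x)
    simpa using (one_le_div (by positivity)).2 hn

theorem parabolicCutoff_apply (n : ℕ) (x : ℝ) :
    parabolicCutoff n x = max 0 (1 - x ^ 2 / (n + 1)) := rfl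

theorem monotone_parabolicCutoff (x : ℝ) : Monotone fun n => parabolicCutoff n x := by
  intro m n hmn
  simp only [parabolicCutoff_apply]
  gcongr

theorem tendsto_parabolicCutoff (x : ℝ) :
    Tendsto (fun n => parabolicCutoff n x) atTop (𝓝 1) := by
  have hdiv : Tendsto (fun n : ℕ => x ^ 2 / ((n : ℝ) + 1)) atTop (𝓝 0) :=
    tendsto_const_nhds.div_atTop
      (tendsto_atTop_add_const_right _ _ tendsto_natCast_atTop_atTop)
  simpa [parabolicCutoff_apply] using (tendsto_const_nhds (x := (0 : ℝ))).max (hdiv.const_sub 1)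

theorem tendsto_integral_eval_mul_parabolicCutoff {L : ℝ[X] →ₗ[ℝ] ℝ} {ν : Measure ℝ}
    (hν : ∀ (p : ℝ[X]) (f : C_c(ℝ, ℝ)), (∀ x, 0 ≤ p.eval x + f x) → 0 ≤ L p + ∫ x, f x ∂ν)
    {q : ℝ[X]} (hq : ∀ x, 0 ≤ q.eval x) :
    Tendsto (fun n => ∫ x, q.eval x * parabolicCutoff n x ∂ν) atTop (𝓝 (L q)) := by
  have hupper (n : ℕ) : ∫ x, q.eval x * parabolicCutoff n x ∂ν ≤ L q := by
    have h := hν q (-(q.toContinuousMap • parabolicCutoff n)) fun x => by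
      have hle : parabolicCutoff n x ≤ 1 := (monotone_parabolicCutoff x).ge_of_tendsto
        (tendsto_parabolicCutoff x) n
      simpa using mul_le_of_le_one_right (hq x) hle
    simpa [integral_neg] using h
  have hlower (n : ℕ) :
      L q - L (X ^ 2 * q) / (n + 1) ≤ ∫ x, q.eval x * parabolicCutoff n x ∂ν := by
    have h := hν ((n + 1 : ℝ)⁻¹ • (X ^ 2 * q) - q) (q.toContinuousMap • parabolicCutoff n)
      fun x => by
        have hle := mul_le_mul_of_nonneg_left
          (le_max_right 0 (1 - x ^ 2 / (n + 1 : ℝ))) (hq x)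
        suffices 0 ≤ (n + 1 : ℝ)⁻¹ * (x ^ 2 * q.eval x) - q.eval x +
            q.eval x * max 0 (1 - x ^ 2 / (n + 1)) by simpa [parabolicCutoff_apply]
        linear_combination hle
    suffices 0 ≤ (n + 1 : ℝ)⁻¹ * L (X ^ 2 * q) - L q + ∫ x, q.eval x * parabolicCutoff n x ∂ν by
      linear_combination this
    simpa using h
  refine tendsto_of_tendsto_of_tendsto_of_le_of_le ?_ tendsto_const_nhds hlower hupper
  have hdiv : Tendsto (fun n : ℕ => L (X ^ 2 * q) / ((n : ℝ) + 1)) atTop (𝓝 0) :=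
    tendsto_const_nhds.div_atTop
      (tendsto_atTop_add_const_right _ _ tendsto_natCast_atTop_atTop)
  simpa using hdiv.const_sub (L q)

theorem lintegral_ofReal_eval_eq {L : ℝ[X] →ₗ[ℝ] ℝ} {ν : Measure ℝ}
    [IsFiniteMeasureOnCompacts ν]
    (hν : ∀ (p : ℝ[X]) (f : C_c(ℝ, ℝ)), (∀ x, 0 ≤ p.eval x + f x) → 0 ≤ L p + ∫ x, f x ∂ν)
    {q : ℝ[X]} (hq : ∀ x, 0 ≤ q.eval x) :
    ∫⁻ x, ENNReal.ofReal (q.eval x) ∂ν = ENNReal.ofReal (L q) := by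
  have hcutoff (n : ℕ) : ENNReal.ofReal (∫ x, q.eval x * parabolicCutoff n x ∂ν) =
      ∫⁻ x, ENNReal.ofReal (q.eval x * parabolicCutoff n x) ∂ν := by
    refine ofReal_integral_eq_lintegral_ofReal ?_ (.of_forall fun x =>
      mul_nonneg (hq x) (le_max_left _ _))
    exact (q.continuous.mul (parabolicCutoff n).continuous).integrable_of_hasCompactSupport
      (parabolicCutoff n).hasCompactSupport.mul_left
  refine tendsto_nhds_unique (lintegral_tendsto_of_tendsto_of_monotone
    (f := fun n x => ENNReal.ofReal (q.eval x * parabolicCutoff n x)) (fun n => ?_) (.of_forall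
      fun x m n hmn => ?_) (.of_forall fun x => ?_)) ?_
  · exact (q.continuous.mul (parabolicCutoff n).continuous).measurable.ennreal_ofReal.aemeasurable
  · exact ENNReal.ofReal_le_ofReal
      (mul_le_mul_of_nonneg_left (monotone_parabolicCutoff x hmn) (hq x))
  · simpa using ENNReal.tendsto_ofReal ((tendsto_parabolicCutoff x).const_mul (q.eval x))
  · simpa only [hcutoff] using
      ENNReal.tendsto_ofReal (tendsto_integral_eval_mul_parabolicCutoff hν hq)

/-- Haviland's theorem on the line. -/
theorem exists_measure_integral_eval_eq {L : ℝ[X] →ₗ[ℝ] ℝ}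
    (hL : ∀ r : ℝ[X], (∀ x, 0 ≤ r.eval x) → 0 ≤ L r) :
    ∃ ν : Measure ℝ, ∀ q : ℝ[X], Integrable (fun x => q.eval x) ν ∧ ∫ x, q.eval x ∂ν = L q := by
  obtain ⟨ν, _, hν⟩ := exists_measure_nonneg_add_integral hL
  refine ⟨ν, fun q => ?_⟩
  have hsq (p : ℝ[X]) : Integrable (fun x => (p ^ 2).eval x) ν ∧
      ∫ x, (p ^ 2).eval x ∂ν = L (p ^ 2) := by
    have hp (x : ℝ) : 0 ≤ (p ^ 2).eval x := by simpa using sq_nonneg (p.eval x)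
    have hlintegral := lintegral_ofReal_eval_eq hν hp
    have hint : Integrable (fun x => (p ^ 2).eval x) ν :=
      ⟨(p ^ 2).continuous.aestronglyMeasurable, by
        rw [hasFiniteIntegral_iff_ofReal (.of_forall hp), hlintegral]; exact ENNReal.ofReal_lt_top⟩
    refine ⟨hint, ?_⟩
    rw [integral_eq_lintegral_of_nonneg_ae (.of_forall hp) hint.aestronglyMeasurable, hlintegral,
      ENNReal.toReal_ofReal (hL _ hp)]
  have hq : q = (4⁻¹ : ℝ) • ((q + 1) ^ 2 - (q - 1) ^ 2) :=
    Polynomial.funext fun x => by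
      simp only [eval_smul, eval_sub, eval_pow, eval_add, eval_one, smul_eq_mul]
      ring
  obtain ⟨hint_add, heq_add⟩ := hsq (q + 1)
  obtain ⟨hint_sub, heq_sub⟩ := hsq (q - 1)
  rw [hq]
  simp only [eval_smul, eval_sub, map_smul, map_sub]
  exact ⟨(hint_add.sub hint_sub).const_mul _, by
    rw [integral_smul, integral_sub hint_add hint_sub, heq_add, heq_sub]⟩

end PositiveFunctionals

/-- `σ` is a representing measure of the Hamburger moment sequence `s`: its moments all exist and
are the terms of `s`. -/
structure HasMoments (σ : Measure ℝ) (s : ℕ → ℝ) : Prop where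
  integrable : ∀ k, Integrable (fun x => x ^ k) σ
  integral_eq : ∀ k, ∫ x, x ^ k ∂σ = s k

namespace HasMoments

variable {σ τ : Measure ℝ} {s t : ℕ → ℝ}

theorem isFiniteMeasure (h : HasMoments σ s) : IsFiniteMeasure σ :=
  (integrable_const_iff_isFiniteMeasure one_ne_zero).1 (by simpa using h.integrable 0)

theorem integrable_eval {𝕜 : Type*} [RCLike 𝕜] (h : HasMoments σ s) (q : 𝕜[X]) :
    Integrable (fun x : ℝ => q.eval (algebraMap ℝ 𝕜 x)) σ := by
  simp only [eval_eq_sum_range, ← map_pow]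
  exact integrable_finsetSum _ fun n _ => (h.integrable n).ofReal.const_mul _

theorem integral_eval (h : HasMoments σ s) (q : ℂ[X]) :
    ∫ x : ℝ, q.eval (x : ℂ) ∂σ = ∑ n ∈ Finset.range (q.natDegree + 1), q.coeff n * s n := by
  simp only [eval_eq_sum_range, ← Complex.ofReal_pow]
  rw [integral_finsetSum _ fun n _ => (h.integrable n).ofReal.const_mul _]
  refine Finset.sum_congr rfl fun n _ => ?_
  rw [integral_const_mul, integral_complex_ofReal, h.integral_eq]

theorem integrable_mul_eval (h : HasMoments σ s) (f : ℝ →ᵇ ℂ) (q : ℂ[X]) :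
    Integrable (fun x : ℝ => f x * q.eval (x : ℂ)) σ :=
  (h.integrable_eval q).bdd_mul f.continuous.aestronglyMeasurable
    (.of_forall f.norm_coe_le_norm)

theorem integrable_eval_div_one_add_sq (h : HasMoments σ s) (q : ℝ[X]) :
    Integrable (fun x => q.eval x / (1 + x ^ 2)) σ := by
  refine (h.integrable_eval q).mono (Continuous.aestronglyMeasurable ?_) (.of_forall fun x => ?_)
  · exact q.continuous.div (by fun_prop) fun x => by positivity
  · rw [norm_div, Real.norm_of_nonneg (by positivity : 0 ≤ 1 + x ^ 2)]
    exact div_le_self (norm_nonneg _) (le_add_of_nonneg_right (sq_nonneg x))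

theorem add (hσ : HasMoments σ s) (hτ : HasMoments τ t) : HasMoments (σ + τ) (s + t) where
  integrable k := (hσ.integrable k).add_measure (hτ.integrable k)
  integral_eq k := by
    rw [integral_add_measure (hσ.integrable k) (hτ.integrable k), hσ.integral_eq, hτ.integral_eq,
      Pi.add_apply]

theorem smul (h : HasMoments σ s) (c : ℝ≥0) : HasMoments (c • σ) (c • s) where
  integrable k := (h.integrable k).smul_measure_nnreal
  integral_eq k := by rw [integral_smul_nnreal_measure, h.integral_eq, Pi.smul_apply]

theorem map_pow (h : HasMoments σ s) (d : ℕ) :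
    HasMoments (σ.map fun x => x ^ d) fun k => s (k * d) where
  integrable k := by
    rw [integrable_map_measure (by fun_prop) (by fun_prop)]
    simpa only [Function.comp_def, ← pow_mul, mul_comm d] using h.integrable (k * d)
  integral_eq k := by
    rw [integral_map (by fun_prop) (by fun_prop), ← h.integral_eq]
    simp only [← pow_mul, mul_comm d]

theorem withDensity_pow (h : HasMoments σ s) {l : ℕ} (hl : Even l) :
    HasMoments (σ.withDensity fun x => (‖x‖₊ ^ l : ℝ≥0)) fun k => s (k + l) := by
  have hsmul (k : ℕ) (x : ℝ) : (‖x‖₊ ^ l : ℝ≥0) • x ^ k = x ^ (k + l) := by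
    rw [NNReal.smul_def, NNReal.coe_pow, coe_nnnorm, Real.norm_eq_abs, hl.pow_abs, smul_eq_mul,
      pow_add, mul_comm]
  refine ⟨fun k => ?_, fun k => ?_⟩
  · rw [integrable_withDensity_iff_integrable_smul (by fun_prop)]
    simpa only [hsmul] using h.integrable (k + l)
  · rw [integral_withDensity_eq_integral_smul (by fun_prop), ← h.integral_eq]
    simp only [hsmul]

theorem measure_univ_eq (hσ : HasMoments σ s) (hτ : HasMoments τ s) :
    σ Set.univ = τ Set.univ := by
  have := hσ.isFiniteMeasure
  have := hτ.isFiniteMeasure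
  rw [← measureReal_eq_measureReal_iff]
  simpa using (hσ.integral_eq 0).trans (hτ.integral_eq 0).symm

end HasMoments

section Resolvent

open Complex (I)

theorem norm_ofReal_sub_I_sq (x : ℝ) : ‖(x : ℂ) - I‖ ^ 2 = 1 + x ^ 2 := by
  rw [Complex.sq_norm, Complex.normSq_apply]
  simp only [Complex.sub_re, Complex.sub_im, Complex.ofReal_re, Complex.ofReal_im, Complex.I_re,
    Complex.I_im]
  ring

theorem ofReal_sub_I_ne_zero (x : ℝ) : (x : ℂ) - I ≠ 0 := by
  rw [← norm_ne_zero_iff, ← pow_ne_zero_iff two_ne_zero, norm_ofReal_sub_I_sq]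
  positivity

/-- The bounded function `x ↦ (x - i)⁻¹`, which separates the points of `ℝ`. -/
noncomputable def resolventAtI : ℝ →ᵇ ℂ :=
  .ofNormedAddCommGroup (fun x => ((x : ℂ) - I)⁻¹)
    (Continuous.inv₀ (by fun_prop) ofReal_sub_I_ne_zero) 1 fun x => by
      rw [norm_inv]
      refine inv_le_one_of_one_le₀ ((one_le_sq_iff₀ (norm_nonneg _)).1 ?_)
      exact norm_ofReal_sub_I_sq x ▸ le_add_of_nonneg_right (sq_nonneg x)

theorem resolventAtI_apply (x : ℝ) : resolventAtI x = ((x : ℂ) - I)⁻¹ := rfl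

theorem exists_norm_resolventAtI_sub_eval_sq_eq {p : ℝ[X]} (hp : aeval I p ≠ 0) :
    ∃ k : ℂ[X], ∀ x : ℝ, ‖resolventAtI x - k.eval (x : ℂ)‖ ^ 2 =
      (p ^ 2).eval x / (1 + x ^ 2) / ‖aeval I p‖ ^ 2 := by
  set w := aeval I p
  -- `1 - p / p(i)` vanishes at `i`, so it is `(X - i) * k` for some polynomial `k`.
  obtain ⟨k, hk⟩ := X_sub_C_dvd_sub_C_eval (a := I) (p := C (-w⁻¹) * p.map (algebraMap ℝ ℂ))
  refine ⟨k, fun x => ?_⟩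
  have hmul : 1 - ((x : ℂ) - I) * k.eval (x : ℂ) = w⁻¹ * (p.eval x : ℝ) := by
    have hx : (p.map (algebraMap ℝ ℂ)).eval (x : ℂ) = (p.eval x : ℝ) :=
      eval_map_apply (algebraMap ℝ ℂ) x
    have hI : (p.map (algebraMap ℝ ℂ)).eval I = w := eval_map_algebraMap _ _
    have heval := congrArg (eval (x : ℂ)) hk
    simp only [eval_sub, eval_mul, eval_C, eval_X, hx, hI, neg_mul, inv_mul_cancel₀ hp] at heval
    linear_combination heval
  have hdiff : resolventAtI x - k.eval (x : ℂ) = (w⁻¹ * (p.eval x : ℝ)) / (x - I) := by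
    rw [← hmul, resolventAtI_apply]
    field_simp [ofReal_sub_I_ne_zero x]
  rw [hdiff, norm_div, div_pow, norm_ofReal_sub_I_sq, norm_mul, norm_inv, mul_pow, inv_pow,
    Complex.norm_real, Real.norm_eq_abs, sq_abs, eval_pow]
  ring

theorem le_add_sq_div {ε : ℝ} (hε : 0 < ε) (y : ℝ) : y ≤ ε + y ^ 2 / ε := by
  have hsq : ε + y ^ 2 / ε - y = ((y - ε / 2) ^ 2 + 3 / 4 * ε ^ 2) / ε := by field_simp; ring
  exact sub_nonneg.1 (hsq ▸ by positivity)

theorem exists_integral_norm_resolventAtI_sub_eval_le {μ : Measure ℝ} {s : ℕ → ℝ}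
    (h : HasMoments μ s) {ε : ℝ} (hε : 0 < ε) {p : ℝ[X]}
    (hp : ∫ x, (p ^ 2).eval x / (1 + x ^ 2) ∂μ < ε ^ 2 * ‖aeval I p‖ ^ 2) :
    ∃ k : ℂ[X], ∫ x : ℝ, ‖resolventAtI x - k.eval (x : ℂ)‖ ∂μ ≤ ε * (μ.real Set.univ + 1) := by
  have := h.isFiniteMeasure
  have hint := h.integrable_eval_div_one_add_sq (p ^ 2)
  have hnonneg : 0 ≤ ∫ x, (p ^ 2).eval x / (1 + x ^ 2) ∂μ :=
    integral_nonneg fun x => by rw [eval_pow]; positivity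
  have hpI : 0 < ‖aeval I p‖ ^ 2 := pos_of_mul_pos_right (hnonneg.trans_lt hp) (sq_nonneg ε)
  obtain ⟨k, hk⟩ := exists_norm_resolventAtI_sub_eval_sq_eq
    (norm_ne_zero_iff.1 ((pow_ne_zero_iff two_ne_zero).1 hpI.ne'))
  have hpointwise (x : ℝ) : ‖resolventAtI x - k.eval (x : ℂ)‖ ≤
      ε + (p ^ 2).eval x / (1 + x ^ 2) / ‖aeval I p‖ ^ 2 / ε :=
    hk x ▸ le_add_sq_div hε _
  refine ⟨k, ?_⟩
  calc ∫ x : ℝ, ‖resolventAtI x - k.eval (x : ℂ)‖ ∂μ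
      ≤ ∫ x, (ε + (p ^ 2).eval x / (1 + x ^ 2) / ‖aeval I p‖ ^ 2 / ε) ∂μ :=
        integral_mono ((resolventAtI.integrable μ).sub (h.integrable_eval k)).norm
          ((integrable_const ε).add ((hint.div_const _).div_const _)) hpointwise
    _ = ε * μ.real Set.univ + (∫ x, (p ^ 2).eval x / (1 + x ^ 2) ∂μ) / ‖aeval I p‖ ^ 2 / ε := by
        rw [integral_add (integrable_const ε) ((hint.div_const _).div_const _), integral_const,
          integral_div, integral_div, smul_eq_mul, mul_comm ε]
    _ ≤ ε * μ.real Set.univ + ε := by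
        gcongr
        rw [div_div, div_le_iff₀ (by positivity)]
        linear_combination hp.le
    _ = ε * (μ.real Set.univ + 1) := by ring

end Resolvent

section Determinacy

/-- `f` times any polynomial has the same integral against `σ` as against `τ`. The multipliers
preserving this condition form the algebra `multiplierSubalgebra`. -/
def IntegralMulEvalEq (σ τ : Measure ℝ) (f : ℝ →ᵇ ℂ) : Prop :=
  ∀ q : ℂ[X], ∫ x : ℝ, f x * q.eval (x : ℂ) ∂σ = ∫ x : ℝ, f x * q.eval (x : ℂ) ∂τ

variable {σ τ : Measure ℝ} {s : ℕ → ℝ}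

theorem HasMoments.integralMulEvalEq_one (hσ : HasMoments σ s) (hτ : HasMoments τ s) :
    IntegralMulEvalEq σ τ 1 := fun q => by
  simpa using (hσ.integral_eval q).trans (hτ.integral_eval q).symm

theorem IntegralMulEvalEq.star {f : ℝ →ᵇ ℂ} (hf : IntegralMulEvalEq σ τ f) :
    IntegralMulEvalEq σ τ (Star.star f) := fun q => by
  have hconj (x : ℝ) : (Star.star f) x * q.eval (x : ℂ) =
      starRingEnd ℂ (f x * (q.map (starRingEnd ℂ)).eval (x : ℂ)) := by
    have hmap : (q.map (starRingEnd ℂ)).map (starRingEnd ℂ) = q := by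
      ext n
      simp
    rw [map_mul, ← eval_map_apply, hmap, Complex.conj_ofReal]
    rfl
  simp only [hconj, integral_conj, hf (q.map (starRingEnd ℂ))]

theorem IntegralMulEvalEq.add (hσ : HasMoments σ s) (hτ : HasMoments τ s) {f g : ℝ →ᵇ ℂ}
    (hf : IntegralMulEvalEq σ τ f) (hg : IntegralMulEvalEq σ τ g) :
    IntegralMulEvalEq σ τ (f + g) := fun q => by
  simp only [BoundedContinuousFunction.coe_add, Pi.add_apply, add_mul]
  rw [integral_add (hσ.integrable_mul_eval f q) (hσ.integrable_mul_eval g q),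
    integral_add (hτ.integrable_mul_eval f q) (hτ.integrable_mul_eval g q), hf, hg]

theorem IntegralMulEvalEq.smul {f : ℝ →ᵇ ℂ} (c : ℂ) (hf : IntegralMulEvalEq σ τ f) :
    IntegralMulEvalEq σ τ (c • f) := fun q => by
  simp only [BoundedContinuousFunction.coe_smul, smul_mul_assoc, integral_smul, hf q]

/-- The bounded functions multiplication by which preserves `IntegralMulEvalEq σ τ`. -/
def multiplierSubalgebra (hσ : HasMoments σ s) (hτ : HasMoments τ s) :
    StarSubalgebra ℂ (ℝ →ᵇ ℂ) where
  carrier := {a | ∀ f, IntegralMulEvalEq σ τ f → IntegralMulEvalEq σ τ (a * f)}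
  mul_mem' ha hb f hf := mul_assoc _ _ f ▸ ha _ (hb f hf)
  add_mem' ha hb f hf := add_mul _ _ f ▸ (ha f hf).add hσ hτ (hb f hf)
  algebraMap_mem' c f hf := Algebra.smul_def c f ▸ hf.smul c
  star_mem' {a} ha f hf := by
    have hstar : star a * f = star (a * star f) := by rw [star_mul, star_star, mul_comm]
    exact hstar ▸ (ha _ hf.star).star

theorem mem_multiplierSubalgebra {hσ : HasMoments σ s} {hτ : HasMoments τ s} {a : ℝ →ᵇ ℂ} :
    a ∈ multiplierSubalgebra hσ hτ ↔
      ∀ f, IntegralMulEvalEq σ τ f → IntegralMulEvalEq σ τ (a * f) := Iff.rfl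

theorem HasMoments.norm_integral_mul_sub_integral_mul_le (hσ : HasMoments σ s)
    (hτ : HasMoments τ s) {f : ℝ →ᵇ ℂ} (hf : IntegralMulEvalEq σ τ f) (g : ℝ →ᵇ ℂ) (k : ℂ[X]) :
    ‖∫ x, f x * g x ∂σ - ∫ x, f x * g x ∂τ‖ ≤ ‖f‖ * ∫ x : ℝ, ‖g x - k.eval (x : ℂ)‖ ∂(σ + τ) := by
  have hdiff {μ : Measure ℝ} (hμ : HasMoments μ s) :
      Integrable (fun x : ℝ => ‖g x - k.eval (x : ℂ)‖) μ := by
    have := hμ.isFiniteMeasure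
    exact ((g.integrable μ).sub (hμ.integrable_eval k)).norm
  have hsplit {μ : Measure ℝ} (hμ : HasMoments μ s) : ∫ x, f x * g x ∂μ =
      ∫ x : ℝ, f x * (g x - k.eval (x : ℂ)) ∂μ + ∫ x : ℝ, f x * k.eval (x : ℂ) ∂μ := by
    have := hμ.isFiniteMeasure
    have hsub := integral_sub ((f * g).integrable μ) (hμ.integrable_mul_eval f k)
    simp only [mul_sub]
    exact sub_eq_iff_eq_add.1 hsub.symm
  have hbound {μ : Measure ℝ} (hμ : HasMoments μ s) :
      ‖∫ x : ℝ, f x * (g x - k.eval (x : ℂ)) ∂μ‖ ≤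
        ‖f‖ * ∫ x : ℝ, ‖g x - k.eval (x : ℂ)‖ ∂μ := by
    rw [← integral_const_mul]
    refine norm_integral_le_of_norm_le ((hdiff hμ).const_mul _) (.of_forall fun x => ?_)
    exact (norm_mul_le _ _).trans (by gcongr; exact f.norm_coe_le_norm x)
  rw [hsplit hσ, hsplit hτ, hf k, add_sub_add_right_eq_sub,
    integral_add_measure (hdiff hσ) (hdiff hτ), mul_add]
  exact (norm_sub_le _ _).trans (add_le_add (hbound hσ) (hbound hτ))

theorem HasMoments.resolventAtI_mem_multiplierSubalgebra (hσ : HasMoments σ s)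
    (hτ : HasMoments τ s) (happrox : ∀ ε > 0, ∃ k : ℂ[X],
      ∫ x : ℝ, ‖resolventAtI x - k.eval (x : ℂ)‖ ∂(σ + τ) ≤ ε) :
    resolventAtI ∈ multiplierSubalgebra hσ hτ := by
  refine mem_multiplierSubalgebra.2 fun f hf q => ?_
  have hresolvent : ∫ x, f x * resolventAtI x ∂σ = ∫ x, f x * resolventAtI x ∂τ := by
    refine eq_of_forall_dist_le fun ε hε => ?_
    obtain ⟨k, hk⟩ := happrox (ε / (‖f‖ + 1)) (by positivity)
    calc _ ≤ ‖f‖ * ∫ x : ℝ, ‖resolventAtI x - k.eval (x : ℂ)‖ ∂(σ + τ) :=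
          dist_eq_norm (E := ℂ) _ _ ▸
            hσ.norm_integral_mul_sub_integral_mul_le hτ hf resolventAtI k
      _ ≤ (‖f‖ + 1) * (ε / (‖f‖ + 1)) := by gcongr; exact le_add_of_nonneg_right zero_le_one
      _ = ε := by field_simp
  obtain ⟨q₁, hq₁⟩ := X_sub_C_dvd_sub_C_eval (a := Complex.I) (p := q)
  have hdecomp (x : ℝ) : (resolventAtI * f) x * q.eval (x : ℂ) =
      f x * q₁.eval (x : ℂ) + q.eval Complex.I * (f x * resolventAtI x) := by
    have heval := congrArg (eval (x : ℂ)) hq₁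
    simp only [eval_sub, eval_mul, eval_C, eval_X] at heval
    rw [BoundedContinuousFunction.mul_apply, resolventAtI_apply, sub_eq_iff_eq_add.1 heval]
    field_simp [ofReal_sub_I_ne_zero x]
  have hint {μ : Measure ℝ} (hμ : HasMoments μ s) :
      Integrable (fun x => q.eval Complex.I * (f x * resolventAtI x)) μ := by
    have := hμ.isFiniteMeasure
    exact ((f * resolventAtI).integrable μ).const_mul _
  simp only [hdecomp]
  rw [integral_add (hσ.integrable_mul_eval f q₁) (hint hσ),
    integral_add (hτ.integrable_mul_eval f q₁) (hint hτ),
    integral_const_mul, integral_const_mul, hresolvent, hf q₁]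

theorem HasMoments.eq_of_resolventAtI_mem (hσ : HasMoments σ s) (hτ : HasMoments τ s)
    (hmem : resolventAtI ∈ multiplierSubalgebra hσ hτ) : σ = τ := by
  have := hσ.isFiniteMeasure
  have := hτ.isFiniteMeasure
  refine ext_of_forall_mem_subalgebra_integral_eq_of_pseudoEMetric_complete_countable (𝕜 := ℂ)
    (A := multiplierSubalgebra hσ hτ) (fun x y hxy => ?_) fun g hg => ?_
  · refine ⟨resolventAtI, ⟨_, ⟨resolventAtI, hmem, rfl⟩, rfl⟩, fun h => hxy ?_⟩
    simpa [resolventAtI_apply] using h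
  · simpa using mem_multiplierSubalgebra.1 hg 1 (hσ.integralMulEvalEq_one hτ) 1

theorem HasMoments.exists_mul_norm_aeval_I_sq_le (hσ : HasMoments σ s) (hτ : HasMoments τ s)
    (hne : σ ≠ τ) : ∃ c > 0, ∀ p : ℝ[X],
      c * ‖aeval Complex.I p‖ ^ 2 ≤ ∫ x, (p ^ 2).eval x / (1 + x ^ 2) ∂(σ + τ) := by
  contrapose! hne
  refine hσ.eq_of_resolventAtI_mem hτ (hσ.resolventAtI_mem_multiplierSubalgebra hτ fun ε hε => ?_)
  set M := (σ + τ).real Set.univ + 1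
  have hM : 0 < M := by positivity
  obtain ⟨p, hp⟩ := hne ((ε / M) ^ 2) (by positivity)
  obtain ⟨k, hk⟩ :=
    exists_integral_norm_resolventAtI_sub_eval_le (hσ.add hτ) (div_pos hε hM) hp
  exact ⟨k, hk.trans_eq (div_mul_cancel₀ ε hM.ne')⟩

end Determinacy

section Perturbation

variable {σ τ : Measure ℝ} {s : ℕ → ℝ}

/-- The functional `r ↦ ∫ r(x) / (1 + x²) ∂σ - c Re r(i)`. The perturbation vanishes on the
multiples of `1 + X²`, so it leaves the moments of `σ` unchanged. -/
noncomputable def HasMoments.perturbedFunctional (h : HasMoments σ s) (c : ℝ) : ℝ[X] →ₗ[ℝ] ℝ where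
  toFun r := ∫ x, r.eval x / (1 + x ^ 2) ∂σ - c * (aeval Complex.I r).re
  map_add' p q := by
    simp only [eval_add, add_div, map_add, Complex.add_re]
    rw [integral_add (h.integrable_eval_div_one_add_sq p) (h.integrable_eval_div_one_add_sq q)]
    ring
  map_smul' a p := by
    simp only [eval_smul, smul_eq_mul, mul_div_assoc, integral_const_mul, map_smul,
      Complex.real_smul, Complex.re_ofReal_mul, RingHom.id_apply]
    ring

theorem HasMoments.perturbedFunctional_apply (h : HasMoments σ s) (c : ℝ) (r : ℝ[X]) :
    h.perturbedFunctional c r =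
      ∫ x, r.eval x / (1 + x ^ 2) ∂σ - c * (aeval Complex.I r).re := rfl

theorem HasMoments.perturbedFunctional_one_add_sq_mul_X_pow (h : HasMoments σ s) (c : ℝ) (k : ℕ) :
    h.perturbedFunctional c ((1 + X ^ 2) * X ^ k) = s k := by
  have hcancel (x : ℝ) : ((1 + X ^ 2) * X ^ k : ℝ[X]).eval x / (1 + x ^ 2) = x ^ k := by
    rw [eval_mul, eval_add, eval_one, eval_pow, eval_X, eval_pow, eval_X,
      mul_div_cancel_left₀ _ (by positivity)]
  have hI : aeval Complex.I ((1 + X ^ 2) * X ^ k : ℝ[X]) = 0 := by simp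
  rw [perturbedFunctional_apply, hI, Complex.zero_re, mul_zero, sub_zero]
  simp only [hcancel, h.integral_eq]

theorem HasMoments.perturbedFunctional_nonneg (h : HasMoments σ s) {c : ℝ} (hc₀ : 0 ≤ c)
    (hc : ∀ p : ℝ[X], c * ‖aeval Complex.I p‖ ^ 2 ≤ ∫ x, (p ^ 2).eval x / (1 + x ^ 2) ∂σ)
    {r : ℝ[X]} (hr : ∀ x, 0 ≤ r.eval x) : 0 ≤ h.perturbedFunctional c r := by
  have hsq (p : ℝ[X]) : 0 ≤ h.perturbedFunctional c (p ^ 2) := by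
    have hre : (aeval Complex.I (p ^ 2)).re ≤ ‖aeval Complex.I p‖ ^ 2 := by
      rw [_root_.map_pow, ← norm_pow]
      exact Complex.re_le_norm _
    rw [perturbedFunctional_apply, sub_nonneg]
    exact (mul_le_mul_of_nonneg_left hre hc₀).trans (hc p)
  obtain ⟨p, q, rfl⟩ := exists_eq_sq_add_sq_of_eval_nonneg hr
  exact map_add (h.perturbedFunctional c) _ _ ▸ add_nonneg (hsq p) (hsq q)

theorem HasMoments.exists_integral_inv_one_add_sq_eq_sub (h : HasMoments σ s) {c : ℝ} (hc₀ : 0 ≤ c)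
    (hc : ∀ p : ℝ[X], c * ‖aeval Complex.I p‖ ^ 2 ≤ ∫ x, (p ^ 2).eval x / (1 + x ^ 2) ∂σ) :
    ∃ η : Measure ℝ, HasMoments η s ∧
      ∫ x, (1 + x ^ 2)⁻¹ ∂η = ∫ x, (1 + x ^ 2)⁻¹ ∂σ - c := by
  obtain ⟨ν, hν⟩ := exists_measure_integral_eval_eq fun r => h.perturbedFunctional_nonneg hc₀ hc
  have hsmul (x y : ℝ) : (1 + ‖x‖₊ ^ 2) • y = (1 + x ^ 2) * y := by
    rw [NNReal.smul_def, NNReal.coe_add, NNReal.coe_one, NNReal.coe_pow, coe_nnnorm,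
      Real.norm_eq_abs, sq_abs, smul_eq_mul]
  have hmul (k : ℕ) (x : ℝ) :
      (1 + ‖x‖₊ ^ 2) • x ^ k = ((1 + X ^ 2) * X ^ k : ℝ[X]).eval x := by simp [hsmul]
  refine ⟨ν.withDensity fun x => (1 + ‖x‖₊ ^ 2 : ℝ≥0), ⟨fun k => ?_, fun k => ?_⟩, ?_⟩
  · rw [integrable_withDensity_iff_integrable_smul (by fun_prop)]
    simpa only [hmul] using (hν _).1
  · rw [integral_withDensity_eq_integral_smul (by fun_prop),
      ← h.perturbedFunctional_one_add_sq_mul_X_pow c, ← (hν _).2]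
    simp only [hmul]
  · have hone (x : ℝ) : (1 + ‖x‖₊ ^ 2) • (1 + x ^ 2)⁻¹ = (1 : ℝ[X]).eval x := by
      rw [hsmul, mul_inv_cancel₀ (by positivity), eval_one]
    rw [integral_withDensity_eq_integral_smul (by fun_prop)]
    simp only [hone, hν]
    simp [perturbedFunctional_apply]

theorem HasMoments.exists_integral_inv_one_add_sq_ne (hσ : HasMoments σ s) (hτ : HasMoments τ s)
    (hne : σ ≠ τ) : ∃ σ' τ' : Measure ℝ, HasMoments σ' s ∧ HasMoments τ' s ∧
      ∫ x, (1 + x ^ 2)⁻¹ ∂σ' ≠ ∫ x, (1 + x ^ 2)⁻¹ ∂τ' := by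
  obtain ⟨c, hc₀, hc⟩ := hσ.exists_mul_norm_aeval_I_sq_le hτ hne
  obtain ⟨η, hη, hηc⟩ := (hσ.add hτ).exists_integral_inv_one_add_sq_eq_sub hc₀.le hc
  have hs : (2⁻¹ : ℝ≥0) • (s + s) = s := by
    rw [← two_nsmul, ← ofNat_smul_eq_nsmul ℝ≥0, inv_smul_smul₀ two_ne_zero]
  refine ⟨(2⁻¹ : ℝ≥0) • (σ + τ), (2⁻¹ : ℝ≥0) • η, hs ▸ (hσ.add hτ).smul _, hs ▸ hη.smul _, ?_⟩
  rw [integral_smul_nnreal_measure, integral_smul_nnreal_measure, hηc]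
  refine (smul_right_injective ℝ (inv_ne_zero two_ne_zero)).ne ?_
  exact (sub_lt_self _ hc₀).ne'

end Perturbation

section Transformations

theorem inv_one_add_sq_eq_comp_pow {d : ℕ} (hd : d ≠ 0) (x : ℝ) :
    (1 + x ^ 2)⁻¹ = (1 + (|x ^ d| ^ (d⁻¹ : ℝ)) ^ 2)⁻¹ := by
  rw [abs_pow, Real.pow_rpow_inv_natCast (abs_nonneg x) hd, sq_abs]

theorem map_pow_ne_of_integral_inv_one_add_sq_ne {σ τ : Measure ℝ}
    (hne : ∫ x, (1 + x ^ 2)⁻¹ ∂σ ≠ ∫ x, (1 + x ^ 2)⁻¹ ∂τ) {d : ℕ} (hd : d ≠ 0) :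
    σ.map (fun x => x ^ d) ≠ τ.map (fun x => x ^ d) := by
  have hmap (μ : Measure ℝ) : ∫ x, (1 + x ^ 2)⁻¹ ∂μ =
      ∫ y, (1 + (|y| ^ (d⁻¹ : ℝ)) ^ 2)⁻¹ ∂μ.map fun x => x ^ d := by
    rw [integral_map (by fun_prop) (Measurable.aestronglyMeasurable (by fun_prop))]
    simp only [← inv_one_add_sq_eq_comp_pow hd]
  rw [hmap, hmap] at hne
  exact fun h => hne (h ▸ rfl)

theorem eq_of_withDensity_eq_of_measure_univ_eq {α : Type*} [MeasurableSpace α]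
    [MeasurableSingletonClass α] {σ τ : Measure α} [IsFiniteMeasure σ] [IsFiniteMeasure τ]
    {f : α → ℝ≥0∞} (hf : Measurable f) {a : α} (hf_zero : ∀ x ≠ a, f x ≠ 0)
    (hf_top : ∀ x ≠ a, f x ≠ ∞) (h : σ.withDensity f = τ.withDensity f)
    (huniv : σ Set.univ = τ Set.univ) : σ = τ := by
  have ha : MeasurableSet ({a} : Set α) := measurableSet_singleton a
  have hinv (μ : Measure α) :
      μ.restrict {a}ᶜ = ((μ.withDensity f).restrict {a}ᶜ).withDensity fun x => (f x)⁻¹ := by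
    rw [restrict_withDensity ha.compl, withDensity_inv_same hf
      (ae_restrict_of_forall_mem ha.compl hf_zero) (ae_restrict_of_forall_mem ha.compl hf_top)]
  have hcompl : σ.restrict {a}ᶜ = τ.restrict {a}ᶜ := by rw [hinv σ, hinv τ, h]
  have hsingleton : σ {a} = τ {a} := by
    have hcompl_univ := congrArg (· Set.univ) hcompl
    simp only [Measure.restrict_apply_univ] at hcompl_univ
    rw [← compl_compl ({a} : Set α), measure_compl ha.compl (measure_ne_top _ _),
      measure_compl ha.compl (measure_ne_top _ _), huniv, hcompl_univ]
  rw [← Measure.restrict_add_restrict_compl (μ := σ) ha,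
    ← Measure.restrict_add_restrict_compl (μ := τ) ha, hcompl, Measure.restrict_singleton,
    Measure.restrict_singleton, hsingleton]

theorem HasMoments.withDensity_pow_ne {σ τ : Measure ℝ} {s : ℕ → ℝ} (hσ : HasMoments σ s)
    (hτ : HasMoments τ s) (hne : σ ≠ τ) (l : ℕ) :
    σ.withDensity (fun x => (‖x‖₊ ^ l : ℝ≥0)) ≠ τ.withDensity fun x => (‖x‖₊ ^ l : ℝ≥0) := by
  have := hσ.isFiniteMeasure
  have := hτ.isFiniteMeasure
  refine fun h => hne (eq_of_withDensity_eq_of_measure_univ_eq (a := 0) (by fun_prop)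
    (fun x hx => ?_) (fun x _ => ENNReal.coe_ne_top) h (hσ.measure_univ_eq hτ))
  simpa using fun h => absurd h hx

end Transformations

end HamburgerMoments

/-- If the Hamburger moment sequence `s` is indeterminate (two distinct
representing measures `σ₁ ≠ σ₂`), then for `d ≥ 1` and even `ℓ₀` the subsequence
`s̃ k = s (kd + ℓ₀)` is also an indeterminate Hamburger moment sequence. -/
theorem subsequence_indeterminate_of_indeterminate
    (s : ℕ → ℝ) (σ₁ σ₂ : Measure ℝ)
    (hint₁ : ∀ k : ℕ, Integrable (fun x : ℝ => x ^ k) σ₁)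
    (hint₂ : ∀ k : ℕ, Integrable (fun x : ℝ => x ^ k) σ₂)
    (hs₁ : ∀ k : ℕ, s k = ∫ x, x ^ k ∂σ₁)
    (hs₂ : ∀ k : ℕ, s k = ∫ x, x ^ k ∂σ₂)
    (hne : σ₁ ≠ σ₂)
    (d ℓ₀ : ℕ) (hd : 1 ≤ d) (hℓ₀ : Even ℓ₀) :
    ∃ τ₁ τ₂ : Measure ℝ, τ₁ ≠ τ₂ ∧
      (∀ k : ℕ, Integrable (fun x : ℝ => x ^ k) τ₁) ∧
      (∀ k : ℕ, Integrable (fun x : ℝ => x ^ k) τ₂) ∧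
      (∀ k : ℕ, s (k * d + ℓ₀) = ∫ x, x ^ k ∂τ₁) ∧
      (∀ k : ℕ, s (k * d + ℓ₀) = ∫ x, x ^ k ∂τ₂) := by
  have hσ₁ : HasMoments σ₁ s := ⟨hint₁, fun k => (hs₁ k).symm⟩
  have hσ₂ : HasMoments σ₂ s := ⟨hint₂, fun k => (hs₂ k).symm⟩
  obtain ⟨η₁, η₂, hη₁, hη₂, hη⟩ := (hσ₁.withDensity_pow hℓ₀).exists_integral_inv_one_add_sq_ne
    (hσ₂.withDensity_pow hℓ₀) (hσ₁.withDensity_pow_ne hσ₂ hne ℓ₀)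
  have hτ₁ := hη₁.map_pow d
  have hτ₂ := hη₂.map_pow d
  exact ⟨η₁.map fun x => x ^ d, η₂.map fun x => x ^ d,
    map_pow_ne_of_integral_inv_one_add_sq_ne hη (Nat.one_le_iff_ne_zero.1 hd),
    hτ₁.integrable, hτ₂.integrable, fun k => (hτ₁.integral_eq k).symm,
    fun k => (hτ₂.integral_eq k).symm⟩
end

section
/- Let σ and σ̃ be nonnegative Borel measures on ℝ with all moments finite, let d ∈ ℕ with d ≥ 1 and ℓ₀ an even natural number, and suppose ∫_ℝ x^{kd+ℓ₀} dσ(x) = ∫_ℝ x^k dσ̃(x) for all k ∈ ℕ₀. Assume the Hamburger moment sequence s̃_k = ∫_ℝ x^k dσ̃(x) is determinate. Then for every λ ∈ ℂ with Im λ ≠ 0, ∫_ℝ x^{ℓ₀}/(x^d − λ) dσ(x) = ∫_ℝ 1/(x − λ) dσ̃(x) (both integrals being absolutely convergent complex-valued integrals). -/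
/-!
The measure obtained from `w • μ` by pushing forward along `g` has `k`-th moment `∫ w * g ^ k ∂μ`.
If these are the moments of a determinate measure `ν`, the two measures coincide, so integrating any
function against `ν` amounts to substituting `g x` in it and integrating against `w • μ`. The case
at hand is `w x = x ^ ℓ₀`, `g x = x ^ d`, with the Cauchy kernel as the function.
-/

open MeasureTheory

variable {α β E : Type*} [MeasurableSpace α] [MeasurableSpace β]
  [NormedAddCommGroup E] [NormedSpace ℝ E]

/-- The image under `g` of the measure with density `w` with respect to `μ`. The weight is
real-valued, since it enters moments as a factor; negative values of `w` are truncated to `0`. -/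
noncomputable def weightedMap (μ : Measure α) (w : α → ℝ) (g : α → β) : Measure β :=
  (μ.withDensity fun x => ENNReal.ofReal (w x)).map g

/-- Determinacy of the Hamburger moment problem solved by `ν`: no other measure on the line with
finite moments has the same moments. That `ν` itself has finite moments is not part of the
definition. -/
def IsMomentDeterminate (ν : Measure ℝ) : Prop :=
  ∀ μ : Measure ℝ, (∀ k : ℕ, Integrable (fun x : ℝ => x ^ k) μ) →
    (∀ k : ℕ, ∫ x, x ^ k ∂μ = ∫ x, x ^ k ∂ν) → μ = ν

section WeightedMap

variable {μ : Measure α} {w : α → ℝ} {g : α → β} {f : β → E}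

theorem integrable_weightedMap_iff (hw : AEMeasurable w μ) (hw₀ : 0 ≤ᵐ[μ] w)
    (hg : AEMeasurable g μ) (hf : AEStronglyMeasurable f (weightedMap μ w g)) :
    Integrable f (weightedMap μ w g) ↔ Integrable (fun x => w x • f (g x)) μ := by
  rw [weightedMap, integrable_map_measure hf (hg.mono_ac (withDensity_absolutelyContinuous μ _)),
    integrable_withDensity_iff_integrable_smul₀' hw.ennreal_ofReal (by simp)]
  refine integrable_congr (hw₀.mono fun x hx => ?_)
  simp only [ENNReal.toReal_ofReal hx, Function.comp_apply]

theorem integral_weightedMap (hw : AEMeasurable w μ) (hw₀ : 0 ≤ᵐ[μ] w)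
    (hg : AEMeasurable g μ) (hf : AEStronglyMeasurable f (weightedMap μ w g)) :
    ∫ y, f y ∂weightedMap μ w g = ∫ x, w x • f (g x) ∂μ := by
  rw [weightedMap, integral_map (hg.mono_ac (withDensity_absolutelyContinuous μ _)) hf,
    integral_withDensity_eq_integral_toReal_smul₀ hw.ennreal_ofReal (by simp)]
  refine integral_congr_ae (hw₀.mono fun x hx => ?_)
  simp only [ENNReal.toReal_ofReal hx]

end WeightedMap

theorem IsMomentDeterminate.weightedMap_eq {ν : Measure ℝ} (hν : IsMomentDeterminate ν)
    {μ : Measure α} {w g : α → ℝ} (hw : AEMeasurable w μ) (hw₀ : 0 ≤ᵐ[μ] w)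
    (hg : AEMeasurable g μ) (hint : ∀ k : ℕ, Integrable (fun x => w x * g x ^ k) μ)
    (hmom : ∀ k : ℕ, ∫ x, w x * g x ^ k ∂μ = ∫ y, y ^ k ∂ν) :
    weightedMap μ w g = ν := by
  refine hν _ (fun k => ?_) (fun k => ?_)
  · exact (integrable_weightedMap_iff hw hw₀ hg (by fun_prop)).2 (hint k)
  · exact (integral_weightedMap hw hw₀ hg (by fun_prop)).trans (hmom k)

theorem integrable_one_div_sub_of_im_ne_zero (ν : Measure ℝ) [IsFiniteMeasure ν] {z : ℂ}
    (hz : z.im ≠ 0) : Integrable (fun x : ℝ => 1 / ((x : ℂ) - z)) ν := by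
  have hmeas : Measurable fun x : ℝ => 1 / ((x : ℂ) - z) := by fun_prop
  refine Integrable.of_bound hmeas.aestronglyMeasurable (1 / |z.im|) (ae_of_all _ fun x => ?_)
  have him : |z.im| ≤ ‖(x : ℂ) - z‖ := by simpa using Complex.abs_im_le_norm ((x : ℂ) - z)
  rw [norm_div, norm_one]
  exact one_div_le_one_div_of_le (abs_pos.2 hz) him

theorem cauchy_transform_substitution_of_determinate_general {ν : Measure ℝ}
    (hν : IsMomentDeterminate ν) {μ : Measure α} {w g : α → ℝ} (hw : AEMeasurable w μ)
    (hw₀ : 0 ≤ᵐ[μ] w) (hg : AEMeasurable g μ)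
    (hint : ∀ k : ℕ, Integrable (fun x => w x * g x ^ k) μ)
    (hmom : ∀ k : ℕ, ∫ x, w x * g x ^ k ∂μ = ∫ y, y ^ k ∂ν)
    {f : ℝ → E} (hf : Integrable f ν) :
    Integrable (fun x => w x • f (g x)) μ ∧ ∫ x, w x • f (g x) ∂μ = ∫ y, f y ∂ν := by
  obtain rfl := hν.weightedMap_eq hw hw₀ hg hint hmom
  exact ⟨(integrable_weightedMap_iff hw hw₀ hg hf.aestronglyMeasurable).1 hf,
    (integral_weightedMap hw hw₀ hg hf.aestronglyMeasurable).symm⟩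

/-- Under the hypotheses of Statement 13, for every `λ ∈ ℂ` with
`Im λ ≠ 0`, `∫ x^{ℓ₀}/(x^d − λ) dσ = ∫ 1/(x − λ) dσ̃`. -/
theorem cauchy_transform_substitution_of_determinate
    (σ σt : Measure ℝ)
    (hintσ : ∀ k : ℕ, Integrable (fun x : ℝ => x ^ k) σ)
    (hintσt : ∀ k : ℕ, Integrable (fun x : ℝ => x ^ k) σt)
    (d ℓ₀ : ℕ) (hd : 1 ≤ d) (hℓ₀ : Even ℓ₀)
    (hmom : ∀ k : ℕ, ∫ x, x ^ (k * d + ℓ₀) ∂σ = ∫ x, x ^ k ∂σt)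
    (hdet : ∀ μ : Measure ℝ,
      (∀ k : ℕ, Integrable (fun x : ℝ => x ^ k) μ) →
      (∀ k : ℕ, ∫ x, x ^ k ∂μ = ∫ x, x ^ k ∂σt) → μ = σt) :
    ∀ lam : ℂ, lam.im ≠ 0 →
      ∫ x : ℝ, (x : ℂ) ^ ℓ₀ / ((x : ℂ) ^ d - lam) ∂σ =
        ∫ x : ℝ, 1 / ((x : ℂ) - lam) ∂σt := by
  intro lam hlam
  have : IsFiniteMeasure σt := (integrable_const_iff_isFiniteMeasure one_ne_zero).1
    (by simpa only [pow_zero] using hintσt 0)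
  have hpow (x : ℝ) (k : ℕ) : x ^ ℓ₀ * (x ^ d) ^ k = x ^ (k * d + ℓ₀) := by ring
  have hsubst := (cauchy_transform_substitution_of_determinate_general hdet
    (μ := σ) (w := fun x => x ^ ℓ₀) (g := fun x => x ^ d)
    (by fun_prop) (ae_of_all _ hℓ₀.pow_nonneg) (by fun_prop)
    (by simpa only [hpow] using fun k => hintσ (k * d + ℓ₀)) (by simpa only [hpow] using hmom)
    (integrable_one_div_sub_of_im_ne_zero σt hlam)).2
  simpa only [Complex.real_smul, Complex.ofReal_pow, mul_one_div] using hsubst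
end
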